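/- arXiv:1404.3372 — 9 statements merged into one kernel-verified Lean document; each statement's English description precedes it below -/
import Mathlib

section
/- Let λ₁, λ₂ > 0, σ₁, σ₂ > 0 and r > 0, μ₁, μ₂ ∈ ℝ. Then the equation w₁(z)w₂(z) − λ₁λ₂ = 0 has exactly four distinct real solutions z₁ < z₂ < z₃ < z₄; moreover z₂ < 0 < z₃ and w₁(z₃) > 0. -/
/-- A concave real quadratic that is positive at `0` splits with roots of opposite signs. -/
lemma concave_quadratic_splits {a b c : ℝ} (ha : 0 < a) (hc : 0 < c) :
    ∃ p q : ℝ, p < 0 ∧ 0 < q ∧ ∀ z, c - b * z - a * z ^ 2 = a * ((z - p) * (q - z)) := by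
  have hD : 0 ≤ b ^ 2 + 4 * a * c := by positivity
  have hsq := Real.sq_sqrt hD
  have habs : |b| < √(b ^ 2 + 4 * a * c) :=
    Real.lt_sqrt_of_sq_lt (by rw [sq_abs]; nlinarith [mul_pos ha hc])
  obtain ⟨h₁, h₂⟩ := abs_lt.mp habs
  set d := √(b ^ 2 + 4 * a * c)
  refine ⟨(-b - d) / (2 * a), (-b + d) / (2 * a), div_neg_of_neg_of_pos (by linarith) (by linarith),
    div_pos (by linarith) (by linarith), fun z => ?_⟩
  field_simp
  linear_combination -hsq

/-- A product of two concave quadratics with roots `p₁ < 0 < q₁` and `p₂ < 0 < q₂` takes every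
value between `0` and its value at `0` at two positive points, the smaller of which precedes
both `q₁` and `q₂`. -/
lemma exists_two_pos_solutions {A k p₁ p₂ q₁ q₂ : ℝ} (hA : 0 < A) (hk : 0 < k)
    (hp₁ : p₁ < 0) (hp₂ : p₂ < 0) (hq₁ : 0 < q₁) (hq₂ : 0 < q₂)
    (hk0 : k < A * ((0 - p₁) * (q₁ - 0) * ((0 - p₂) * (q₂ - 0)))) :
    ∃ x y : ℝ, 0 < x ∧ x < y ∧ x < q₁ ∧ x < q₂ ∧
      A * ((x - p₁) * (q₁ - x) * ((x - p₂) * (q₂ - x))) = k ∧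
      A * ((y - p₁) * (q₁ - y) * ((y - p₂) * (q₂ - y))) = k := by
  set f : ℝ → ℝ := fun z => A * ((z - p₁) * (q₁ - z) * ((z - p₂) * (q₂ - z))) with hf
  have hcont : Continuous f := by fun_prop
  have hm : 0 < min q₁ q₂ := lt_min hq₁ hq₂
  have hfm : f (min q₁ q₂) = 0 := by
    rcases min_choice q₁ q₂ with h | h <;> simp [hf, h]
  obtain ⟨x, hx, hfx⟩ := intermediate_value_Ioo' hm.le hcont.continuousOn
    (show k ∈ Set.Ioo (f (min q₁ q₂)) (f 0) from ⟨hfm ▸ hk, hk0⟩)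
  obtain ⟨hxq₁, hxq₂⟩ := lt_min_iff.mp hx.2
  have hT : 1 < 1 + k / A := by linarith [div_pos hk hA]
  set T := 1 + k / A with hTdef
  have hAT : k < A * T := by
    rw [hTdef, mul_add, mul_div_cancel₀ _ hA.ne']; linarith
  set M := max q₁ q₂ + T
  have hM₁ : T ≤ M - q₁ := by linarith [le_max_left q₁ q₂]
  have hM₂ : T ≤ M - q₂ := by linarith [le_max_right q₁ q₂]
  have hfM : k < f M := by
    have e : f M = A * ((M - q₁) * (M - p₁) * ((M - q₂) * (M - p₂))) := by simp only [hf]; ring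
    have h₁ : T ≤ (M - q₁) * (M - p₁) := by nlinarith
    have h₂ : 1 ≤ (M - q₂) * (M - p₂) := by nlinarith
    have h₃ : T ≤ (M - q₁) * (M - p₁) * ((M - q₂) * (M - p₂)) := by nlinarith
    rw [e]
    exact hAT.trans_le (mul_le_mul_of_nonneg_left h₃ hA.le)
  have hmM : min q₁ q₂ ≤ M := by linarith [min_le_left q₁ q₂]
  obtain ⟨y, hy, hfy⟩ := intermediate_value_Ioo hmM hcont.continuousOn
    (show k ∈ Set.Ioo (f (min q₁ q₂)) (f M) from ⟨hfm ▸ hk, hfM⟩)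
  exact ⟨x, y, hx.1, hx.2.trans hy.1, hxq₁, hxq₂, hfx, hfy⟩

/-- Four distinct roots of a nonzero polynomial of degree at most four are all of its roots. -/
lemma Polynomial.isRoot_iff_of_four_roots {P : Polynomial ℝ} (hP : P ≠ 0) (hdeg : P.natDegree ≤ 4)
    {a b c d : ℝ} (hab : a < b) (hbc : b < c) (hcd : c < d)
    (ha : P.IsRoot a) (hb : P.IsRoot b) (hc : P.IsRoot c) (hd : P.IsRoot d) (z : ℝ) :
    P.IsRoot z ↔ z = a ∨ z = b ∨ z = c ∨ z = d := by
  have hcard : ({a, b, c, d} : Finset ℝ).card = 4 := by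
    rw [Finset.card_insert_of_notMem, Finset.card_insert_of_notMem,
      Finset.card_insert_of_notMem, Finset.card_singleton] <;> grind
  have hsub : ({a, b, c, d} : Finset ℝ) ⊆ P.roots.toFinset := by
    intro x hx
    simp only [Finset.mem_insert, Finset.mem_singleton] at hx
    rw [Multiset.mem_toFinset, Polynomial.mem_roots hP]
    rcases hx with rfl | rfl | rfl | rfl <;> assumption
  have heq := Finset.eq_of_subset_of_card_le hsub
    (by rw [hcard]; exact (Multiset.toFinset_card_le _).trans ((P.card_roots').trans hdeg))
  rw [← Polynomial.mem_roots hP, ← Multiset.mem_toFinset, ← heq]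
  simp

/-- For λ₁, λ₂ > 0, σ₁, σ₂ > 0, r > 0, μ₁, μ₂ ∈ ℝ, the equation
w₁(z)w₂(z) − λ₁λ₂ = 0, where wᵢ(z) = r + λᵢ − μᵢ z − (σᵢ²/2) z(z−1), has exactly four
distinct real solutions z₁ < z₂ < z₃ < z₄ with z₂ < 0 < z₃ and w₁(z₃) > 0. -/
theorem stmt_0 (l1 l2 s1 s2 r m1 m2 : ℝ)
    (hl1 : 0 < l1) (hl2 : 0 < l2) (hs1 : 0 < s1) (hs2 : 0 < s2) (hr : 0 < r)
    (w1 w2 : ℝ → ℝ)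
    (hw1 : ∀ z, w1 z = r + l1 - m1 * z - s1 ^ 2 / 2 * z * (z - 1))
    (hw2 : ∀ z, w2 z = r + l2 - m2 * z - s2 ^ 2 / 2 * z * (z - 1)) :
    ∃ z1 z2 z3 z4 : ℝ, z1 < z2 ∧ z2 < z3 ∧ z3 < z4 ∧ z2 < 0 ∧ 0 < z3 ∧ 0 < w1 z3 ∧
      ∀ z : ℝ, w1 z * w2 z - l1 * l2 = 0 ↔ (z = z1 ∨ z = z2 ∨ z = z3 ∨ z = z4) := by
  obtain ⟨p₁, q₁, hp₁, hq₁, h₁⟩ := concave_quadratic_splits (a := s1 ^ 2 / 2)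
    (b := m1 - s1 ^ 2 / 2) (c := r + l1) (by positivity) (by positivity)
  obtain ⟨p₂, q₂, hp₂, hq₂, h₂⟩ := concave_quadratic_splits (a := s2 ^ 2 / 2)
    (b := m2 - s2 ^ 2 / 2) (c := r + l2) (by positivity) (by positivity)
  have hw1' (z : ℝ) : w1 z = s1 ^ 2 / 2 * ((z - p₁) * (q₁ - z)) := by
    rw [hw1, ← h₁]; ring
  have hw2' (z : ℝ) : w2 z = s2 ^ 2 / 2 * ((z - p₂) * (q₂ - z)) := by
    rw [hw2, ← h₂]; ring
  set A := s1 ^ 2 / 2 * (s2 ^ 2 / 2)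
  have hA : 0 < A := by positivity
  have hk : 0 < l1 * l2 := by positivity
  have hQ (z : ℝ) : w1 z * w2 z = A * ((z - p₁) * (q₁ - z) * ((z - p₂) * (q₂ - z))) := by
    rw [hw1', hw2']; ring
  have hk0 : l1 * l2 < A * ((0 - p₁) * (q₁ - 0) * ((0 - p₂) * (q₂ - 0))) := by
    rw [← hQ, hw1, hw2]
    nlinarith [mul_pos hr hr, mul_pos hr hl1, mul_pos hr hl2]
  obtain ⟨z3, z4, hz3, hz34, hzq, -, hf3, hf4⟩ :=
    exists_two_pos_solutions hA hk hp₁ hp₂ hq₁ hq₂ hk0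
  obtain ⟨x, y, hx, hxy, -, -, hfx, hfy⟩ :=
    exists_two_pos_solutions (p₁ := -q₁) (p₂ := -q₂) (q₁ := -p₁) (q₂ := -p₂) hA hk
      (by linarith) (by linarith) (by linarith) (by linarith) (by linarith)
  refine ⟨-y, -x, z3, z4, by linarith, by linarith, hz34, by linarith, hz3, ?_, fun z => ?_⟩
  · have := mul_pos (show 0 < z3 - p₁ by linarith) (show 0 < q₁ - z3 by linarith)
    rw [hw1']
    positivity
  open Polynomial in
  let P : ℝ[X] := C A * ((X - C p₁) * (C q₁ - X) * ((X - C p₂) * (C q₂ - X))) - C (l1 * l2)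
  have heval (t : ℝ) : P.IsRoot t ↔ w1 t * w2 t - l1 * l2 = 0 := by
    simp [P, Polynomial.IsRoot, hQ]
  have hP : P ≠ 0 := by
    intro h
    have := (heval 0).mp (by simp [h])
    rw [hQ] at this
    linarith
  have hdeg : P.natDegree ≤ 4 := by
    simp only [P]
    compute_degree
  rw [← heval]
  refine Polynomial.isRoot_iff_of_four_roots hP hdeg (by linarith) (by linarith) hz34
    ?_ ?_ ?_ ?_ z <;> rw [heval, hQ] <;> linarith
end

section
/- Let λ₁, λ₂ > 0, σ₁, σ₂ > 0, r > 0 and μ₁ ≤ μ₂ real, and let z₃ be the third (in increasing order) of the four distinct real solutions of w₁(z)w₂(z) − λ₁λ₂ = 0. If r > x₂, then z₃ > 1. -/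
/-- A downward parabola lies below any given level far enough to the right. -/
theorem exists_forall_ge_quadratic_le_neg (A m c K : ℝ) (hc : 0 < c) (hK : 0 ≤ K) :
    ∃ N : ℝ, ∀ z, N ≤ z → A - m * z - c * z * (z - 1) ≤ -K := by
  refine ⟨1 + (|m| + |A| + K) / c, fun z hz => ?_⟩
  have hdiv : (|m| + |A| + K) / c ≤ z - 1 := by linarith
  have hmul : |m| + |A| + K ≤ (z - 1) * c := (div_le_iff₀ hc).mp hdiv
  have hz1 : 1 ≤ z := by
    have : 0 ≤ (|m| + |A| + K) / c := by positivity
    linarith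
  have hstep : z * (|m| + |A| + K) ≤ z * ((z - 1) * c) :=
    mul_le_mul_of_nonneg_left hmul (by linarith)
  have hm : -m * z ≤ |m| * z := mul_le_mul_of_nonneg_right (neg_le_abs m) (by linarith)
  have hAK : 0 ≤ (z - 1) * (|A| + K) := mul_nonneg (by linarith) (by positivity)
  nlinarith [le_abs_self A]

/-- With λ₁, λ₂, σ₁, σ₂ > 0, r > 0, μ₁ ≤ μ₂, if z₃ is the third of the four
distinct real solutions of w₁(z)w₂(z) − λ₁λ₂ = 0 and x₂ is the larger root of
x² + (λ₁−μ₁+λ₂−μ₂)x + (λ₁−μ₁)(λ₂−μ₂) − λ₁λ₂ = 0, then r > x₂ implies z₃ > 1. -/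
theorem stmt_1 (l1 l2 s1 s2 r m1 m2 : ℝ)
    (hl1 : 0 < l1) (hl2 : 0 < l2) (hs1 : 0 < s1) (hs2 : 0 < s2) (hr : 0 < r)
    (hm : m1 ≤ m2)
    (w1 w2 : ℝ → ℝ)
    (hw1 : ∀ z, w1 z = r + l1 - m1 * z - s1 ^ 2 / 2 * z * (z - 1))
    (hw2 : ∀ z, w2 z = r + l2 - m2 * z - s2 ^ 2 / 2 * z * (z - 1))
    (z1 z2 z3 z4 : ℝ) (h12 : z1 < z2) (h23 : z2 < z3) (h34 : z3 < z4)
    (hroots : ∀ z : ℝ, w1 z * w2 z - l1 * l2 = 0 ↔ (z = z1 ∨ z = z2 ∨ z = z3 ∨ z = z4))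
    (x1 x2 : ℝ) (hx12 : x1 < x2)
    (hxroots : ∀ x : ℝ, x ^ 2 + (l1 - m1 + l2 - m2) * x + (l1 - m1) * (l2 - m2) - l1 * l2 = 0
        ↔ (x = x1 ∨ x = x2))
    (hrx : x2 < r) :
    1 < z3 := by
  have hc1 : 0 < s1 ^ 2 / 2 := by positivity
  have hc2 : 0 < s2 ^ 2 / 2 := by positivity
  have hx1 := (hxroots x1).mpr (Or.inl rfl)
  have hx2 := (hxroots x2).mpr (Or.inr rfl)
  have hsum : x1 + x2 = -(l1 - m1 + l2 - m2) := by
    have hne : x2 - x1 ≠ 0 := by linarith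
    apply mul_left_cancel₀ hne
    linarith
  have hfactor : ∀ x, (x + l1 - m1) * (x + l2 - m2) - l1 * l2 = (x - x1) * (x - x2) := by
    intro x
    linear_combination (x - x2) * hsum + hx2
  have hll : 0 < l1 * l2 := mul_pos hl1 hl2
  have hlt : m1 - l1 < x2 := by
    by_contra! h
    have := hfactor (m1 - l1)
    have : 0 ≤ (m1 - l1 - x1) * (m1 - l1 - x2) := mul_nonneg (by linarith) (by linarith)
    nlinarith
  have hw1_one : 0 < w1 1 := by rw [hw1]; linarith
  have hQ_one : 0 < w1 1 * w2 1 - l1 * l2 := by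
    have hpos : 0 < (r - x1) * (r - x2) := mul_pos (by linarith) (by linarith)
    rw [← hfactor] at hpos
    rw [hw1, hw2]
    linarith
  have hcont1 : Continuous w1 := by rw [funext hw1]; fun_prop
  have hcont2 : Continuous w2 := by rw [funext hw2]; fun_prop
  have hQcont : Continuous fun z => w1 z * w2 z - l1 * l2 := by fun_prop
  obtain ⟨N1, hN1⟩ := exists_forall_ge_quadratic_le_neg (r + l1) m1 _ l1 hc1 hl1.le
  obtain ⟨N2, hN2⟩ := exists_forall_ge_quadratic_le_neg (r + l2) m2 _ l2 hc2 hl2.le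
  obtain ⟨N, hN1N, hN2N, h1N⟩ : ∃ N, N1 ≤ N ∧ N2 ≤ N ∧ 1 ≤ N :=
    ⟨max N1 (max N2 1), by simp, by simp, by simp⟩
  have hw1N : w1 N ≤ -l1 := by rw [hw1]; exact hN1 N hN1N
  have hw2N : w2 N ≤ -l2 := by rw [hw2]; exact hN2 N hN2N
  have hQN : 0 ≤ w1 N * w2 N - l1 * l2 := by nlinarith
  -- `Q` is negative at a zero `b > 1` of `w1`, so it has a zero on each side of `b`.
  obtain ⟨b, ⟨h1b, hbN⟩, hb⟩ :=
    intermediate_value_Icc' h1N hcont1.continuousOn ⟨by linarith, hw1_one.le⟩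
  have hQb : w1 b * w2 b - l1 * l2 < 0 := by rw [hb]; linarith
  obtain ⟨p, ⟨h1p, hpb⟩, hp⟩ :=
    intermediate_value_Icc' h1b hQcont.continuousOn ⟨hQb.le, hQ_one.le⟩
  obtain ⟨q, ⟨hbq, -⟩, hq⟩ :=
    intermediate_value_Icc hbN hQcont.continuousOn ⟨hQb.le, hQN⟩
  have hp1 : 1 < p := lt_of_le_of_ne h1p (by rintro rfl; exact hQ_one.ne' hp)
  have hbq_lt : b < q := lt_of_le_of_ne hbq (by rintro rfl; exact hQb.ne hq)
  rcases (hroots p).mp hp with h | h | h | h <;>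
    rcases (hroots q).mp hq with h' | h' | h' | h' <;> linarith
end

section
/- Let λ₁, λ₂ > 0 and μ₁ ≤ μ₂ real. The quadratic equation x² + (λ₁ − μ₁ + λ₂ − μ₂)x + (λ₁ − μ₁)(λ₂ − μ₂) − λ₁λ₂ = 0 has two distinct real roots x₁ < x₂. If μ₁ < μ₂ then x₁ < μ₁ < x₂ < μ₂; if μ₁ = μ₂ then x₁ = μ₁ − λ₁ − λ₂ and x₂ = μ₁. -/
/-- For λ₁, λ₂ > 0 and μ₁ ≤ μ₂, the quadratic
x² + (λ₁−μ₁+λ₂−μ₂)x + (λ₁−μ₁)(λ₂−μ₂) − λ₁λ₂ = 0 has two distinct real roots x₁ < x₂;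
if μ₁ < μ₂ then x₁ < μ₁ < x₂ < μ₂, and if μ₁ = μ₂ then x₁ = μ₁ − λ₁ − λ₂ and x₂ = μ₁. -/
theorem stmt_3 (l1 l2 m1 m2 : ℝ) (hl1 : 0 < l1) (hl2 : 0 < l2) (hm : m1 ≤ m2) :
    ∃ x1 x2 : ℝ, x1 < x2 ∧
      (∀ x : ℝ, x ^ 2 + (l1 - m1 + l2 - m2) * x + (l1 - m1) * (l2 - m2) - l1 * l2 = 0
          ↔ (x = x1 ∨ x = x2)) ∧
      (m1 < m2 → x1 < m1 ∧ m1 < x2 ∧ x2 < m2) ∧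
      (m1 = m2 → x1 = m1 - l1 - l2 ∧ x2 = m1) := by
  obtain ⟨x1, x2, hlt, hsum, hprod⟩ : ∃ x1 x2 : ℝ, x1 < x2 ∧
      x1 + x2 = -(l1 - m1 + l2 - m2) ∧ x1 * x2 = (l1 - m1) * (l2 - m2) - l1 * l2 := by
    have hD : 0 < (l1 - m1 - l2 + m2) ^ 2 + 4 * (l1 * l2) := by positivity
    have hs := Real.sqrt_pos.2 hD
    have hsq := Real.sq_sqrt hD.le
    set s := √((l1 - m1 - l2 + m2) ^ 2 + 4 * (l1 * l2))
    refine ⟨(-(l1 - m1 + l2 - m2) - s) / 2, (-(l1 - m1 + l2 - m2) + s) / 2, ?_, ?_, ?_⟩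
    · linarith
    · ring
    · linear_combination -hsq / 4
  have hfactor (x : ℝ) : x ^ 2 + (l1 - m1 + l2 - m2) * x + (l1 - m1) * (l2 - m2) - l1 * l2 =
      (x - x1) * (x - x2) := by
    linear_combination x * hsum - hprod
  have hm1 : (m1 - x1) * (m1 - x2) = l1 * (m1 - m2) := by
    rw [← hfactor]; ring
  have hm2 : (m2 - x1) * (m2 - x2) = l2 * (m2 - m1) := by
    rw [← hfactor]; ring
  refine ⟨x1, x2, hlt, fun x => ?_, fun h => ?_, fun h => ?_⟩
  · rw [hfactor, mul_eq_zero, sub_eq_zero, sub_eq_zero]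
  · have hneg : (m1 - x1) * (m1 - x2) < 0 :=
      hm1 ▸ mul_neg_of_pos_of_neg hl1 (sub_neg.2 h)
    have hpos : 0 < (m2 - x1) * (m2 - x2) := hm2 ▸ mul_pos hl2 (sub_pos.2 h)
    obtain ⟨h1, h2⟩ | ⟨h1, h2⟩ := mul_neg_iff.1 hneg
    · have h3 := (mul_pos_iff_of_pos_left (by linarith)).1 hpos
      exact ⟨by linarith, by linarith, by linarith⟩
    · linarith
  · rw [h, sub_self, mul_zero] at hm1
    obtain h1 | h1 := mul_eq_zero.1 hm1
    · linarith
    · exact ⟨by linarith, by linarith⟩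
end

section
/- Let λ₁, λ₂ > 0, μ₁ ≤ μ₂ real and r ∈ ℝ. If r ≤ μ₁, then r ≤ x₂. -/
/-- For λ₁, λ₂ > 0, μ₁ ≤ μ₂ and r ∈ ℝ, with x₁ < x₂ the two roots of
x² + (λ₁−μ₁+λ₂−μ₂)x + (λ₁−μ₁)(λ₂−μ₂) − λ₁λ₂ = 0, if r ≤ μ₁ then r ≤ x₂. -/
theorem stmt_4 (l1 l2 m1 m2 r : ℝ) (hl1 : 0 < l1) (hl2 : 0 < l2) (hm : m1 ≤ m2)
    (x1 x2 : ℝ) (hx12 : x1 < x2)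
    (hroots : ∀ x : ℝ, x ^ 2 + (l1 - m1 + l2 - m2) * x + (l1 - m1) * (l2 - m2) - l1 * l2 = 0
        ↔ (x = x1 ∨ x = x2))
    (hr : r ≤ m1) :
    r ≤ x2 := by
  have h1 := (hroots x1).2 (Or.inl rfl)
  have h2 := (hroots x2).2 (Or.inr rfl)
  have vieta : l1 - m1 + l2 - m2 = -(x1 + x2) := by
    have h : (x2 - x1) * (x1 + x2 + (l1 - m1 + l2 - m2)) = 0 := by linear_combination h2 - h1
    rcases mul_eq_zero.1 h with h | h <;> linarith
  have factor : (m1 - x1) * (m1 - x2) = l1 * (m1 - m2) := by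
    linear_combination -h2 + (x2 - m1) * vieta
  by_contra! hlt
  have hpos : 0 < (m1 - x1) * (m1 - x2) := mul_pos (by linarith) (by linarith)
  have hnonpos : l1 * (m1 - m2) ≤ 0 :=
    mul_nonpos_of_nonneg_of_nonpos hl1.le (sub_nonpos.2 hm)
  linarith
end

section
/- Let λ₁, λ₂ > 0, μ₁ ≤ μ₂ real and r ∈ ℝ. If r > μ₂, then r > x₂. -/
/-- For λ₁, λ₂ > 0, μ₁ ≤ μ₂ and r ∈ ℝ, with x₁ < x₂ the two roots of
x² + (λ₁−μ₁+λ₂−μ₂)x + (λ₁−μ₁)(λ₂−μ₂) − λ₁λ₂ = 0, if r > μ₂ then r > x₂. -/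
theorem stmt_5 (l1 l2 m1 m2 r : ℝ) (hl1 : 0 < l1) (hl2 : 0 < l2) (hm : m1 ≤ m2)
    (x1 x2 : ℝ) (hx12 : x1 < x2)
    (hroots : ∀ x : ℝ, x ^ 2 + (l1 - m1 + l2 - m2) * x + (l1 - m1) * (l2 - m2) - l1 * l2 = 0
        ↔ (x = x1 ∨ x = x2))
    (hr : m2 < r) :
    x2 < r := by
  have hx := (hroots x2).2 (Or.inr rfl)
  by_contra! hle
  have h1 : 0 < x2 - m1 := by linarith
  have h2 : 0 < x2 - m2 := by linarith
  linarith [mul_pos h1 h2, mul_pos h1 hl2, mul_pos hl1 h2]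
end

section
/- Let λ₁, λ₂ > 0, μ₁, μ₂ ∈ ℝ and r ∈ ℝ with r > x₂. Then r + λ₁ − μ₁ > 0, r + λ₂ − μ₂ > 0, and (r + λ₁ − μ₁)(r + λ₂ − μ₂) > λ₁λ₂. -/
/-- For λ₁, λ₂ > 0, μ₁, μ₂ ∈ ℝ and r > x₂ (where x₁ < x₂ are the roots of
x² + (λ₁−μ₁+λ₂−μ₂)x + (λ₁−μ₁)(λ₂−μ₂) − λ₁λ₂ = 0), we have r + λ₁ − μ₁ > 0,
r + λ₂ − μ₂ > 0 and (r + λ₁ − μ₁)(r + λ₂ − μ₂) > λ₁λ₂. -/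
theorem stmt_6 (l1 l2 m1 m2 r : ℝ) (hl1 : 0 < l1) (hl2 : 0 < l2)
    (x1 x2 : ℝ) (hx12 : x1 < x2)
    (hroots : ∀ x : ℝ, x ^ 2 + (l1 - m1 + l2 - m2) * x + (l1 - m1) * (l2 - m2) - l1 * l2 = 0
        ↔ (x = x1 ∨ x = x2))
    (hr : x2 < r) :
    0 < r + l1 - m1 ∧ 0 < r + l2 - m2 ∧ l1 * l2 < (r + l1 - m1) * (r + l2 - m2) := by
  have root1 := (hroots x1).2 (Or.inl rfl)
  have root2 := (hroots x2).2 (Or.inr rfl)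
  have vieta : x1 + x2 + (l1 - m1 + l2 - m2) = 0 := by
    refine (mul_eq_zero.1 ?_).resolve_left (sub_pos.2 hx12).ne'
    linear_combination root2 - root1
  have factor (x : ℝ) : (x + l1 - m1) * (x + l2 - m2) - l1 * l2 = (x - x1) * (x - x2) := by
    linear_combination (x - x1) * vieta + root1
  have hl : 0 < l1 * l2 := mul_pos hl1 hl2
  have lt_of_neg {y : ℝ} (hy : (y - x1) * (y - x2) < 0) : y < r := by
    by_contra! h
    exact hy.not_ge (mul_nonneg (by linarith) (by linarith))
  have h1 : m1 - l1 < r := lt_of_neg (by rw [← factor]; linarith)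
  have h2 : m2 - l2 < r := lt_of_neg (by rw [← factor]; linarith)
  have h3 : 0 < (r - x1) * (r - x2) := mul_pos (by linarith) (by linarith)
  exact ⟨by linarith, by linarith, by linarith [factor r]⟩
end

section
/- Let Q be a real polynomial of degree 4 with positive leading coefficient having four distinct real roots z₁ < z₂ < z₃ < z₄, and let c ∈ ℝ with c > z₂. If Q(c) > 0 and Q″(c) < 0, then c < z₃. -/
open Polynomial in
/-- A quartic with four distinct roots is its leading coefficient times the product of the
corresponding linear factors. -/
theorem Polynomial.eq_C_mul_of_degree_eq_four {K : Type*} [Field K] {Q : K[X]}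
    (hdeg : Q.degree = 4) {z1 z2 z3 z4 : K} (hnd : ({z1, z2, z3, z4} : Multiset K).Nodup)
    (hr1 : Q.eval z1 = 0) (hr2 : Q.eval z2 = 0) (hr3 : Q.eval z3 = 0) (hr4 : Q.eval z4 = 0) :
    Q = C Q.leadingCoeff * ((X - C z1) * (X - C z2) * (X - C z3) * (X - C z4)) := by
  have hQ : Q ≠ 0 := by
    rintro rfl
    simp at hdeg
  have hnat : Q.natDegree = 4 := natDegree_eq_of_degree_eq_some hdeg
  have hle : ({z1, z2, z3, z4} : Multiset K) ≤ Q.roots := by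
    rw [Multiset.le_iff_subset hnd]
    intro x hx
    rw [mem_roots hQ, IsRoot.def]
    simp only [Multiset.insert_eq_cons, Multiset.mem_cons, Multiset.mem_singleton] at hx
    rcases hx with rfl | rfl | rfl | rfl <;> assumption
  have hroots : ({z1, z2, z3, z4} : Multiset K) = Q.roots :=
    Multiset.eq_of_le_of_card_le hle (by simpa [hnat] using Q.card_roots')
  have h := C_leadingCoeff_mul_prod_multiset_X_sub_C (p := Q) (by simp [← hroots, hnat])
  rw [← hroots] at h
  simpa [mul_assoc] using h.symm

/-- Let Q be a real polynomial of degree 4 with positive leading coefficient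
having four distinct real roots z₁ < z₂ < z₃ < z₄, and c > z₂. If Q(c) > 0 and Q″(c) < 0,
then c < z₃. -/
theorem stmt_9 (Q : Polynomial ℝ) (hdeg : Q.degree = 4) (hlead : 0 < Q.leadingCoeff)
    (z1 z2 z3 z4 : ℝ) (h12 : z1 < z2) (h23 : z2 < z3) (h34 : z3 < z4)
    (hr1 : Q.eval z1 = 0) (hr2 : Q.eval z2 = 0) (hr3 : Q.eval z3 = 0) (hr4 : Q.eval z4 = 0)
    (c : ℝ) (hc : z2 < c) (hQc : 0 < Q.eval c)
    (hQ''c : (Polynomial.derivative (Polynomial.derivative Q)).eval c < 0) :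
    c < z3 := by
  have hnd : ({z1, z2, z3, z4} : Multiset ℝ).Nodup := by
    simp [h12.ne, h23.ne, h34.ne, (h12.trans h23).ne, (h23.trans h34).ne,
      ((h12.trans h23).trans h34).ne]
  have hQ := Polynomial.eq_C_mul_of_degree_eq_four hdeg hnd hr1 hr2 hr3 hr4
  generalize Q.leadingCoeff = a at hlead hQ
  subst hQ
  by_contra! h3
  have p1 : 0 < c - z1 := by linarith
  have p2 : 0 < c - z2 := by linarith
  have p3 : 0 ≤ c - z3 := by linarith
  have p4 : 0 < c - z4 := by
    simp only [Polynomial.eval_mul, Polynomial.eval_sub, Polynomial.eval_C,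
      Polynomial.eval_X, ← mul_assoc] at hQc
    exact pos_of_mul_pos_right hQc (by positivity)
  have hsecond : 0 ≤ 2 * a * ((c - z1) * (c - z2) + (c - z1) * (c - z3) + (c - z1) * (c - z4)
      + (c - z2) * (c - z3) + (c - z2) * (c - z4) + (c - z3) * (c - z4)) := by
    positivity
  simp at hQ''c
  linarith
end

section
/- Let Q be a real polynomial of degree 4 with positive leading coefficient having four distinct real roots z₁ < z₂ < z₃ < z₄, and let c ∈ ℝ with c > z₂. If Q(c) > 0 and Q‴(c) < 0, then c < z₃. -/
open Polynomial

/-- A quartic with four distinct roots is the product of its leading coefficient and the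
corresponding linear factors. -/
theorem Polynomial.eq_C_leadingCoeff_mul_of_degree_eq_four (Q : ℝ[X]) (hdeg : Q.degree = 4)
    {z1 z2 z3 z4 : ℝ} (h12 : z1 < z2) (h23 : z2 < z3) (h34 : z3 < z4)
    (hr1 : Q.eval z1 = 0) (hr2 : Q.eval z2 = 0) (hr3 : Q.eval z3 = 0) (hr4 : Q.eval z4 = 0) :
    Q = C Q.leadingCoeff * ((X - C z1) * (X - C z2) * (X - C z3) * (X - C z4)) := by
  have hQ : Q ≠ 0 := by
    rintro rfl
    simp at hdeg
  have hnat : Q.natDegree = 4 := natDegree_eq_of_degree_eq_some hdeg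
  have hnodup : ({z1, z2, z3, z4} : Multiset ℝ).Nodup := by
    simp [h12.ne, h23.ne, h34.ne, (h12.trans h23).ne, (h23.trans h34).ne,
      (h12.trans (h23.trans h34)).ne]
  have hle : ({z1, z2, z3, z4} : Multiset ℝ) ≤ Q.roots := by
    rw [Multiset.le_iff_subset hnodup]
    intro z hz
    simp only [Multiset.insert_eq_cons, Multiset.mem_cons, Multiset.mem_singleton] at hz
    rw [mem_roots hQ, IsRoot.def]
    rcases hz with rfl | rfl | rfl | rfl <;> assumption
  have hroots : ({z1, z2, z3, z4} : Multiset ℝ) = Q.roots :=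
    Multiset.eq_of_le_of_card_le hle (by simpa [hnat] using Q.card_roots')
  have hprod := C_leadingCoeff_mul_prod_multiset_X_sub_C (p := Q) (by simp [← hroots, hnat])
  rw [← hroots] at hprod
  simpa [mul_assoc] using hprod.symm

/-- Let Q be a real polynomial of degree 4 with positive leading coefficient
having four distinct real roots z₁ < z₂ < z₃ < z₄, and c > z₂. If Q(c) > 0 and Q‴(c) < 0,
then c < z₃. -/
theorem stmt_10 (Q : Polynomial ℝ) (hdeg : Q.degree = 4) (hlead : 0 < Q.leadingCoeff)
    (z1 z2 z3 z4 : ℝ) (h12 : z1 < z2) (h23 : z2 < z3) (h34 : z3 < z4)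
    (hr1 : Q.eval z1 = 0) (hr2 : Q.eval z2 = 0) (hr3 : Q.eval z3 = 0) (hr4 : Q.eval z4 = 0)
    (c : ℝ) (hc : z2 < c) (hQc : 0 < Q.eval c)
    (hQ'''c : (Polynomial.derivative (Polynomial.derivative (Polynomial.derivative Q))).eval c < 0) :
    c < z3 := by
  have hQ := Q.eq_C_leadingCoeff_mul_of_degree_eq_four hdeg h12 h23 h34 hr1 hr2 hr3 hr4
  rw [hQ] at hQc hQ'''c
  generalize Q.leadingCoeff = a at *
  have hthird : 6 * a * (4 * c - z1 - z2 - z3 - z4) < 0 := by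
    simp at hQ'''c
    linarith
  simp only [eval_mul, eval_C, eval_sub, eval_X] at hQc
  have hsum : 4 * c - z1 - z2 - z3 - z4 < 0 := by
    by_contra! h
    exact absurd hthird (not_lt.mpr (by positivity))
  by_contra! h3
  have h4 : c < z4 := by linarith
  have hprod : 0 ≤ a * ((c - z1) * (c - z2) * (c - z3)) :=
    mul_nonneg hlead.le (mul_nonneg (mul_nonneg (by linarith) (by linarith)) (by linarith))
  nlinarith [mul_nonneg hprod (sub_nonneg.mpr h4.le)]
end

section
/- Let r, λ₁, λ₂, C, K > 0. Then the pair (v₁, v₂) = (−min{C/r, K}, −min{C/r, K}) is the unique pair of real numbers satisfying the system min{(r + λ₁)v₁ − λ₁v₂ + C, v₁ + K} = 0 and min{(r + λ₂)v₂ − λ₂v₁ + C, v₂ + K} = 0. -/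
/-- Comparison: a solution of the first equation lies below any supersolution of the second. -/
lemma le_of_obstacle_system {r a b C K x y : ℝ} (hr : 0 < r) (ha : 0 < a) (hb : 0 < b)
    (hx : min ((r + a) * x - a * y + C) (x + K) = 0)
    (hy : 0 ≤ min ((r + b) * y - b * x + C) (y + K)) : x ≤ y := by
  by_contra! hlt
  obtain ⟨hy₁, hy₂⟩ := le_min_iff.1 hy
  rcases min_eq_iff.1 hx with ⟨h, -⟩ | ⟨h, -⟩
  · nlinarith [mul_pos hr (sub_pos.2 hlt), mul_pos ha (sub_pos.2 hlt),
      mul_pos hb (sub_pos.2 hlt)]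
  · linarith

/-- The scalar obstacle equation has the unique solution `-min (C / r) K`. -/
lemma min_mul_add_eq_zero_iff {r C K v : ℝ} (hr : 0 < r) :
    min (r * v + C) (v + K) = 0 ↔ v = -min (C / r) K := by
  obtain ⟨D, rfl⟩ : ∃ D, C = r * D := ⟨C / r, by field_simp⟩
  rw [mul_div_cancel_left₀ D hr.ne', ← mul_add, min_eq_iff]
  simp only [mul_eq_zero, hr.ne', false_or]
  constructor
  · rintro (⟨h, h'⟩ | ⟨h, h'⟩)
    · rw [h] at h'
      rw [min_eq_left (by linarith)]
      linarith
    · rw [h] at h'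
      rw [min_eq_right (by nlinarith)]
      linarith
  · rintro rfl
    rcases le_total D K with h | h
    · left
      rw [min_eq_left h]
      simp [h]
    · right
      rw [min_eq_right h]
      simp only [neg_add_cancel, true_and]
      nlinarith

/-- For r, λ₁, λ₂, C, K > 0, the pair
(v₁, v₂) = (−min{C/r, K}, −min{C/r, K}) is the unique solution of the system
min{(r+λ₁)v₁ − λ₁v₂ + C, v₁ + K} = 0 and min{(r+λ₂)v₂ − λ₂v₁ + C, v₂ + K} = 0. -/
theorem stmt_17 (r l1 l2 C K : ℝ)
    (hr : 0 < r) (hl1 : 0 < l1) (hl2 : 0 < l2) (hC : 0 < C) (hK : 0 < K) :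
    ∀ v1 v2 : ℝ,
      (min ((r + l1) * v1 - l1 * v2 + C) (v1 + K) = 0 ∧
        min ((r + l2) * v2 - l2 * v1 + C) (v2 + K) = 0) ↔
      (v1 = -min (C / r) K ∧ v2 = -min (C / r) K) := by
  intro v1 v2
  have diag (a v : ℝ) : (r + a) * v - a * v + C = r * v + C := by ring
  constructor
  · rintro ⟨h1, h2⟩
    obtain rfl : v1 = v2 := le_antisymm
      (le_of_obstacle_system hr hl1 hl2 h1 h2.ge) (le_of_obstacle_system hr hl2 hl1 h2 h1.ge)
    rw [diag, min_mul_add_eq_zero_iff hr] at h1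
    exact ⟨h1, h1⟩
  · rintro ⟨h1, h2⟩
    obtain rfl : v1 = v2 := h1.trans h2.symm
    rw [diag, diag]
    exact ⟨(min_mul_add_eq_zero_iff hr).2 h1, (min_mul_add_eq_zero_iff hr).2 h1⟩
end
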